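/- arXiv:1302.5168 — 3 statements merged into one kernel-verified Lean document; each statement's English description precedes it below -/
import Mathlib

section
/- Let q ≥ 2, let x ∈ ℝ^d with ‖x‖ = 1, and for a (q−1)×d matrix W with i.i.d. standard Gaussian entries set E_x(u) = E_W ⟨s_{Q_W(x)}, W u⟩ for u ∈ ℝ^d. Then for every u in the Euclidean unit ball B^d, (1/2) ‖u − x‖^2 ≤ (1/λ(q)) ( E_x(x) − E_x(u) ). -/
open MeasureTheory ProbabilityTheory
open scoped RealInnerProductSpace ENNReal Pointwise

/-- The standard Gaussian measure on `EuclideanSpace ℝ (Fin n)`. -/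
noncomputable def stdGaussian (n : ℕ) : Measure (EuclideanSpace ℝ (Fin n)) :=
  (Measure.pi fun _ : Fin n => gaussianReal 0 1).map
    (EuclideanSpace.equiv (Fin n) ℝ).symm

/-- The law of an `n × d` random matrix with i.i.d. standard Gaussian entries. -/
noncomputable def stdGaussianMatrix (n d : ℕ) : Measure (Fin n → Fin d → ℝ) :=
  Measure.pi fun _ : Fin n => Measure.pi fun _ : Fin d => gaussianReal 0 1

/-- Action of a matrix (given as `Fin n → Fin d → ℝ`) on a vector of `EuclideanSpace ℝ (Fin d)`,
producing a vector in `EuclideanSpace ℝ (Fin n)`. -/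
noncomputable def act {n d : ℕ} (W : Fin n → Fin d → ℝ) (x : EuclideanSpace ℝ (Fin d)) :
    EuclideanSpace ℝ (Fin n) :=
  (EuclideanSpace.equiv (Fin n) ℝ).symm (fun k => ∑ j, W k j * x j)

/-- A simplex coding: `q` unit vectors in `ℝ^{q-1}` with pairwise inner products `-1/(q-1)`
summing to zero. -/
def IsSimplexCoding {q : ℕ} (s : Fin q → EuclideanSpace ℝ (Fin (q - 1))) : Prop :=
  (∀ j, ‖s j‖ = 1) ∧ (∀ i j, i ≠ j → ⟪s i, s j⟫ = -(1 / ((q : ℝ) - 1))) ∧ (∑ j, s j = 0)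

/-- The Gaussian mean width of a set `K ⊆ ℝ^d`. -/
noncomputable def meanWidth {d : ℕ} (K : Set (EuclideanSpace ℝ (Fin d))) : ℝ :=
  ∫ g, sSup ((fun z => ⟪g, z⟫) '' (K - K)) ∂(stdGaussian d)

/-- `λ(q) = E max_j ⟨s_j, g⟩` for a standard Gaussian `g` in `ℝ^{q-1}`. -/
noncomputable def lambdaQ {q : ℕ} (s : Fin q → EuclideanSpace ℝ (Fin (q - 1))) : ℝ :=
  ∫ g, (⨆ j, ⟪s j, g⟫) ∂(stdGaussian (q - 1))

lemma lin_law {d : ℕ} (y : EuclideanSpace ℝ (Fin d)) :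
    (Measure.pi fun _ : Fin d => gaussianReal 0 1).map (fun w => ∑ j, w j * y j)
      = (gaussianReal 0 1).map (fun r => ‖y‖ * r) := by
  have : IsProbabilityMeasure ((Measure.pi fun _ : Fin d => gaussianReal 0 1).map
      (fun w => ∑ j, w j * y j)) :=
    Measure.isProbabilityMeasure_map (Measurable.aemeasurable (by fun_prop))
  have : IsProbabilityMeasure ((gaussianReal 0 1).map (fun r => ‖y‖ * r)) :=
    Measure.isProbabilityMeasure_map (Measurable.aemeasurable (by fun_prop))
  apply Measure.ext_of_charFun
  ext t
  have h1 := charFun_stdGaussian (E := EuclideanSpace ℝ (Fin d)) (t • y)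
  rw [← map_pi_eq_stdGaussian, charFun_apply, integral_map (Measurable.aemeasurable (by fun_prop))
    (Measurable.aestronglyMeasurable (by fun_prop))] at h1
  rw [gaussianReal_map_const_mul, charFun_gaussianReal, charFun_apply, integral_map (Measurable.aemeasurable (by fun_prop))
    (Measurable.aestronglyMeasurable (by fun_prop))]
  have h2 : ∀ w : Fin d → ℝ, ⟪∑ j, w j * y j, t⟫ = ⟪WithLp.toLp 2 w, t • y⟫ := by
    intro w
    simp [PiLp.inner_apply, Finset.mul_sum]
    apply Finset.sum_congr rfl
    intros; ring
  simp_rw [h2]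
  rw [h1]
  congr 1
  simp [norm_smul]
  push_cast [← Complex.ofReal_pow]
  have h3 : ((|t| : ℝ) : ℂ) ^ 2 = (t : ℂ) ^ 2 := by
    rw [← Complex.ofReal_pow, sq_abs, Complex.ofReal_pow]
  simp only [mul_pow, h3, Complex.ofReal_pow]
  ring

lemma act_law (n : ℕ) {d : ℕ} (y : EuclideanSpace ℝ (Fin d)) :
    (stdGaussianMatrix n d).map (fun W => act W y)
      = (_root_.stdGaussian n).map (fun g => ‖y‖ • g) := by
  have e1 : (fun W : Fin n → Fin d → ℝ => act W y) =
      (EuclideanSpace.equiv (Fin n) ℝ).symm ∘ (fun W i => ∑ j, W i j * y j) := rfl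
  have e2 : (fun g : EuclideanSpace ℝ (Fin n) => ‖y‖ • g) ∘ (EuclideanSpace.equiv (Fin n) ℝ).symm
     = (EuclideanSpace.equiv (Fin n) ℝ).symm ∘ (fun w i => ‖y‖ * w i) := by
    ext w i; simp
  have m : Measurable (EuclideanSpace.equiv (Fin n) ℝ).symm :=
    (EuclideanSpace.equiv (Fin n) ℝ).symm.continuous.measurable
  unfold _root_.stdGaussian
  rw [e1, Measure.map_map (by fun_prop) m, e2, ← Measure.map_map m (by fun_prop),
    ← Measure.map_map m (by fun_prop)]
  congr 1
  have : IsProbabilityMeasure ((Measure.pi fun _ : Fin d => gaussianReal 0 1).map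
      (fun w => ∑ j, w j * y j)) :=
    Measure.isProbabilityMeasure_map (Measurable.aemeasurable (by fun_prop))
  have : IsProbabilityMeasure ((gaussianReal 0 1).map (fun r => ‖y‖ * r)) :=
    Measure.isProbabilityMeasure_map (Measurable.aemeasurable (by fun_prop))
  rw [stdGaussianMatrix, Measure.pi_map_pi (f := fun _ (w : Fin d → ℝ) => ∑ j, w j * y j)
    (by intros; apply Measurable.aemeasurable; fun_prop),
    Measure.pi_map_pi (f := fun _ (w : ℝ) => ‖y‖ * w) (by intros; apply Measurable.aemeasurable; fun_prop)]
  simp_rw [lin_law]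

instance (n : ℕ) : IsProbabilityMeasure (_root_.stdGaussian n) :=
  Measure.isProbabilityMeasure_map
    (EuclideanSpace.equiv (Fin n) ℝ).symm.continuous.measurable.aemeasurable

instance (n d : ℕ) : IsProbabilityMeasure (stdGaussianMatrix n d) := by
  unfold stdGaussianMatrix; infer_instance

lemma std_eq (n : ℕ) : _root_.stdGaussian n
    = ProbabilityTheory.stdGaussian (EuclideanSpace ℝ (Fin n)) := by
  rw [← map_pi_eq_stdGaussian]; rfl

lemma int_norm (n : ℕ) : Integrable (fun g => ‖g‖) (_root_.stdGaussian n) := by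
  rw [std_eq]
  exact (IsGaussian.integrable_id).norm

lemma meas_act {n d : ℕ} (y : EuclideanSpace ℝ (Fin d)) :
    Measurable (fun W : Fin n → Fin d → ℝ => act W y) :=
  (EuclideanSpace.equiv (Fin n) ℝ).symm.continuous.measurable.comp
    (by fun_prop : Measurable (fun (W : Fin n → Fin d → ℝ) i => ∑ j, W i j * y j))

lemma int_act (n : ℕ) {d : ℕ} (y : EuclideanSpace ℝ (Fin d)) :
    Integrable (fun W => ‖act W y‖) (stdGaussianMatrix n d) := by
  have h : Integrable (fun g => ‖g‖) ((stdGaussianMatrix n d).map (fun W => act W y)) := by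
    rw [act_law, integrable_map_measure (by fun_prop) (by fun_prop)]
    have := (int_norm n).const_mul ‖y‖
    refine this.congr (Filter.Eventually.of_forall fun g => ?_)
    simp [norm_smul]
  exact (integrable_map_measure (by fun_prop) (meas_act y).aemeasurable).1 h

section
variable {q : ℕ} {s : Fin q → EuclideanSpace ℝ (Fin (q - 1))}

lemma abs_inner_le' (hs : IsSimplexCoding s) (j : Fin q) (g : EuclideanSpace ℝ (Fin (q - 1))) :
    |⟪s j, g⟫| ≤ ‖g‖ := by
  have := abs_real_inner_le_norm (s j) g
  rwa [hs.1 j, one_mul] at this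

lemma le_sup' (s : Fin q → EuclideanSpace ℝ (Fin (q - 1))) (j : Fin q)
    (g : EuclideanSpace ℝ (Fin (q - 1))) : ⟪s j, g⟫ ≤ ⨆ j, ⟪s j, g⟫ :=
  le_ciSup (f := fun j => ⟪s j, g⟫) (Set.finite_range _).bddAbove j

lemma sup_nonneg (hq : 2 ≤ q) (hs : IsSimplexCoding s) (g : EuclideanSpace ℝ (Fin (q - 1))) :
    0 ≤ ⨆ j, ⟪s j, g⟫ := by
  have h : ∑ j, ⟪s j, g⟫ = 0 := by rw [← sum_inner, hs.2.2, inner_zero_left]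
  have h2 : ∑ j, ⟪s j, g⟫ ≤ ∑ _j : Fin q, ⨆ j, ⟪s j, g⟫ :=
    Finset.sum_le_sum fun j _ => le_sup' s j g
  rw [h] at h2
  simp only [Finset.sum_const, Finset.card_univ, Fintype.card_fin, nsmul_eq_mul] at h2
  have : (0:ℝ) < q := by exact_mod_cast (by omega : 0 < q)
  exact nonneg_of_mul_nonneg_right h2 this

lemma meas_sup (s : Fin q → EuclideanSpace ℝ (Fin (q - 1))) :
    Measurable (fun g => ⨆ j, ⟪s j, g⟫) := by
  apply Measurable.iSup
  intro j; fun_prop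

lemma sup_le_norm (hq : 2 ≤ q) (hs : IsSimplexCoding s) (g : EuclideanSpace ℝ (Fin (q - 1))) :
    ⨆ j, ⟪s j, g⟫ ≤ ‖g‖ := by
  haveI : Nonempty (Fin q) := ⟨⟨0, by omega⟩⟩
  exact ciSup_le fun j => (le_abs_self _).trans (abs_inner_le' hs j g)

lemma int_sup (hq : 2 ≤ q) (hs : IsSimplexCoding s) :
    Integrable (fun g => ⨆ j, ⟪s j, g⟫) (_root_.stdGaussian (q - 1)) := by
  refine (int_norm _).mono' (meas_sup s).aestronglyMeasurable (Filter.Eventually.of_forall fun g => ?_)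
  rw [Real.norm_eq_abs, abs_of_nonneg (sup_nonneg hq hs g)]
  exact sup_le_norm hq hs g

lemma lambda_pos (hq : 2 ≤ q) (hs : IsSimplexCoding s) : 0 < lambdaQ s := by
  have h0 : 0 ≤ lambdaQ s := integral_nonneg fun g => sup_nonneg hq hs g
  refine lt_of_le_of_ne h0 fun h => ?_
  have h1 := (integral_eq_zero_iff_of_nonneg (fun g => sup_nonneg hq hs g) (int_sup hq hs)).1 h.symm
  let j0 : Fin q := ⟨0, by omega⟩
  have h2 : ∀ᵐ g ∂(_root_.stdGaussian (q - 1)), ⟪s j0, g⟫ = 0 := by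
    filter_upwards [h1] with g hg
    have hs0 : ∑ j, ⟪s j, g⟫ = 0 := by rw [← sum_inner, hs.2.2, inner_zero_left]
    have hle : ∀ j ∈ Finset.univ, ⟪s j, g⟫ ≤ 0 := fun j _ => (le_sup' s j g).trans hg.le
    exact (Finset.sum_eq_zero_iff_of_nonpos hle).1 hs0 j0 (Finset.mem_univ _)
  have h3 : ∀ᵐ w ∂(Measure.pi fun _ : Fin (q - 1) => gaussianReal 0 1),
      ∑ k, w k * s j0 k = 0 := by
    have := ae_of_ae_map
      (EuclideanSpace.equiv (Fin (q - 1)) ℝ).symm.continuous.measurable.aemeasurable h2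
    filter_upwards [this] with w hw
    simpa [PiLp.inner_apply] using hw
  have h4 : ∀ᵐ r ∂((Measure.pi fun _ : Fin (q - 1) => gaussianReal 0 1).map
      (fun w => ∑ k, w k * s j0 k)), r = 0 := by
    exact (ae_map_iff (p := fun r : ℝ => r = 0) (Measurable.aemeasurable (by fun_prop))
      (measurableSet_singleton (0:ℝ))).2 h3
  rw [lin_law, hs.1 j0] at h4
  simp only [one_mul, Measure.map_id'] at h4
  have := nullSingletonClass_gaussianReal (μ := 0) (v := 1) one_ne_zero
  have h5 : ∀ᵐ r ∂(gaussianReal 0 1), r ≠ 0 := Measure.ae_ne _ 0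
  obtain ⟨r, hr, hr'⟩ := (h4.and h5).exists
  exact hr' hr

lemma int_sup_act (s : Fin q → EuclideanSpace ℝ (Fin (q - 1))) {d : ℕ}
    (y : EuclideanSpace ℝ (Fin d)) :
    ∫ W, (⨆ j, ⟪s j, act W y⟫) ∂(stdGaussianMatrix (q - 1) d) = ‖y‖ * lambdaQ s := by
  rw [← integral_map (φ := fun W => act W y) (f := fun g => ⨆ j, ⟪s j, g⟫)
    (meas_act y).aemeasurable (meas_sup s).aestronglyMeasurable, act_law,
    integral_map (Measurable.aemeasurable (by fun_prop)) (meas_sup s).aestronglyMeasurable, lambdaQ, ← integral_const_mul]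
  congr 1
  ext g
  simp_rw [inner_smul_right]
  exact (Real.mul_iSup_of_nonneg (norm_nonneg y) _).symm

end

/-- For `‖x‖ = 1` and `E_x(u) = E_W ⟪s (Q_W x), W u⟫`, every `u` in the unit
ball satisfies `(1/2) ‖u - x‖² ≤ (1/λ(q)) (E_x(x) - E_x(u))`. -/
theorem qary_excess_risk_bound
    (q d : ℕ) (hq : 2 ≤ q)
    (s : Fin q → EuclideanSpace ℝ (Fin (q - 1))) (hs : IsSimplexCoding s)
    (x : EuclideanSpace ℝ (Fin d)) (hx : ‖x‖ = 1)
    (Q : (Fin (q - 1) → Fin d → ℝ) → Fin q) (hQmeas : Measurable Q)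
    (hQ : ∀ W j, ⟪s j, act W x⟫ ≤ ⟪s (Q W), act W x⟫)
    (Ex : EuclideanSpace ℝ (Fin d) → ℝ)
    (hEx : ∀ u, Ex u = ∫ W, ⟪s (Q W), act W u⟫ ∂(stdGaussianMatrix (q - 1) d))
    (u : EuclideanSpace ℝ (Fin d)) (hu : ‖u‖ ≤ 1) :
    (1 / 2) * ‖u - x‖ ^ 2 ≤ (1 / lambdaQ s) * (Ex x - Ex u) := by
  have meas : ∀ v, Measurable fun W => ⟪s (Q W), act W v⟫ := fun v =>
    ((measurable_of_finite s).comp hQmeas).inner (meas_act v)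
  have int : ∀ v, Integrable (fun W => ⟪s (Q W), act W v⟫) (stdGaussianMatrix (q - 1) d) :=
    fun v => (int_act (q - 1) v).mono' (meas v).aestronglyMeasurable
      (Filter.Eventually.of_forall fun W => abs_inner_le' hs _ _)
  have act_add : ∀ W v w, act (n := q - 1) (d := d) W (v + w) = act W v + act W w := by
    intro W v w; ext i; simp [act, mul_add, Finset.sum_add_distrib]
  have act_smul : ∀ W (c : ℝ) v, act (n := q - 1) (d := d) W (c • v) = c • act W v := by
    intro W c v; ext i; simp [act, Finset.mul_sum]
    exact Finset.sum_congr rfl fun _ _ => by ring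
  let L : EuclideanSpace ℝ (Fin d) →ₗ[ℝ] ℝ :=
    { toFun := Ex
      map_add' := fun v w => by
        simp only [hEx, act_add, inner_add_right]
        exact integral_add (int v) (int w)
      map_smul' := fun c v => by
        simp only [hEx, act_smul, inner_smul_right, RingHom.id_apply, smul_eq_mul]
        exact integral_const_mul c _ }
  let e := (InnerProductSpace.toDual ℝ (EuclideanSpace ℝ (Fin d))).symm
    (LinearMap.toContinuousLinearMap L)
  have he : ∀ v, ⟪e, v⟫ = Ex v := fun v => by
    simp only [e, InnerProductSpace.toDual_symm_apply]; rfl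
  have intS : ∀ v : EuclideanSpace ℝ (Fin d), Integrable (fun W => ⨆ j, ⟪s j, act W v⟫)
      (stdGaussianMatrix (q - 1) d) := fun v =>
    (int_act (q - 1) v).mono' ((meas_sup s).comp (meas_act v)).aestronglyMeasurable
      (Filter.Eventually.of_forall fun W => by
        rw [Real.norm_eq_abs, abs_of_nonneg (sup_nonneg hq hs _)]
        exact sup_le_norm hq hs _)
  have hle : ∀ v, Ex v ≤ ‖v‖ * lambdaQ s := fun v => by
    rw [hEx, ← int_sup_act]
    exact integral_mono (int v) (intS v) fun W => le_sup' s _ _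
  haveI : Nonempty (Fin q) := ⟨⟨0, by omega⟩⟩
  have hxx : Ex x = lambdaQ s := by
    have := int_sup_act s x
    rw [hx, one_mul] at this
    rw [hEx, ← this]
    congr 1
    ext W
    exact le_antisymm (le_sup' s _ _) (ciSup_le fun j => hQ W j)
  have hpos := lambda_pos hq hs
  set l := lambdaQ s
  have hne : ‖e‖ ≤ l := by
    have := hle e
    rw [← he, real_inner_self_eq_norm_sq] at this
    rcases (norm_nonneg e).eq_or_lt with h | h
    · rw [← h]; exact hpos.le
    · nlinarith
  have hz : ‖e - l • x‖ ^ 2 ≤ 0 := by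
    rw [norm_sub_sq_real, inner_smul_right, he, hxx, norm_smul, hx, Real.norm_eq_abs, mul_one,
      sq_abs]
    nlinarith [norm_nonneg e]
  have hex : e = l • x := by
    have : ‖e - l • x‖ = 0 := by
      have := norm_nonneg (e - l • x); nlinarith
    exact sub_eq_zero.1 (norm_eq_zero.1 this)
  have hu' : Ex u = l * ⟪u, x⟫ := by
    rw [← he, hex, inner_smul_left, real_inner_comm]; rfl
  rw [hxx, hu', norm_sub_sq_real, hx]
  have : 1 / l * (l - l * ⟪u, x⟫) = 1 - ⟪u, x⟫ := by field_simp
  rw [this]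
  nlinarith [norm_nonneg u]
end

section
/- There exists a universal constant C > 0 such that the following holds for every integer q ≥ 2 and every σ > 0. Let s_0, …, s_{q−1} be a simplex coding in ℝ^{q−1}, let g ~ N(0, I_{q−1}), let h_0, …, h_{q−1} be i.i.d. N(0, σ^2) random variables independent of g, and let γ̄ = argmax_{j=0,…,q−1} ( ⟨s_j, g⟩ + h_j ). Then E ⟨s_{γ̄}, g⟩ ≥ C √( log q / (1 + σ^2) ). -/
open MeasureTheory ProbabilityTheory
open scoped RealInnerProductSpace ENNReal Pointwise

namespace NoisyLB

noncomputable def mx {q : ℕ} [NeZero q] (x : Fin q → ℝ) : ℝ :=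
  Finset.univ.sup' Finset.univ_nonempty x

lemma le_mx {q : ℕ} [NeZero q] (x : Fin q → ℝ) (j : Fin q) : x j ≤ mx x :=
  Finset.le_sup' x (Finset.mem_univ j)

lemma mx_le {q : ℕ} [NeZero q] {x : Fin q → ℝ} {a : ℝ} (h : ∀ j, x j ≤ a) : mx x ≤ a :=
  Finset.sup'_le _ _ fun j _ => h j

lemma exists_mx {q : ℕ} [NeZero q] (x : Fin q → ℝ) : ∃ j, mx x = x j := by
  obtain ⟨j, -, hj⟩ := Finset.exists_mem_eq_sup' (s := Finset.univ) Finset.univ_nonempty x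
  exact ⟨j, hj⟩

lemma continuous_mx {q : ℕ} [NeZero q] : Continuous (mx (q := q)) := by
  unfold mx
  exact Continuous.finset_sup'_apply _ fun i _ => continuous_apply i

lemma mx_add {q : ℕ} [NeZero q] (x : Fin q → ℝ) (c : ℝ) : mx (fun j => x j + c) = mx x + c := by
  apply le_antisymm
  · exact mx_le fun j => by linarith [le_mx x j]
  · obtain ⟨j, hj⟩ := exists_mx x
    rw [hj]; exact le_mx (fun j => x j + c) j

lemma mx_mul {q : ℕ} [NeZero q] (x : Fin q → ℝ) {k : ℝ} (hk : 0 ≤ k) :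
    mx (fun j => k * x j) = k * mx x := by
  apply le_antisymm
  · exact mx_le fun j => mul_le_mul_of_nonneg_left (le_mx x j) hk
  · obtain ⟨j, hj⟩ := exists_mx x
    rw [hj]; exact le_mx (fun j => k * x j) j

lemma abs_mx_le {q : ℕ} [NeZero q] (x : Fin q → ℝ) : |mx x| ≤ ∑ j, |x j| := by
  obtain ⟨j, hj⟩ := exists_mx x
  rw [hj]
  exact Finset.single_le_sum (f := fun j => |x j|) (fun i _ => abs_nonneg _) (Finset.mem_univ j)

lemma pi_exp {n : ℕ} (v : NNReal) (u : Fin n → ℝ) :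
    ∫ x, Complex.exp (((∑ j, u j * x j : ℝ) : ℂ) * Complex.I)
      ∂(Measure.pi fun _ : Fin n => gaussianReal 0 v)
      = Complex.exp (((-(v * ∑ j, u j ^ 2) / 2 : ℝ) : ℂ)) := by
  have h1 : ∀ x : Fin n → ℝ, Complex.exp (((∑ j, u j * x j : ℝ) : ℂ) * Complex.I)
      = ∏ j, Complex.exp (u j * x j * Complex.I) := by
    intro x
    rw [← Complex.exp_sum]
    push_cast
    rw [Finset.sum_mul]
  simp_rw [h1]
  rw [integral_fintype_prod_eq_prod (f := fun j (x : ℝ) => Complex.exp (u j * x * Complex.I))]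
  simp_rw [← charFun_apply_real, charFun_gaussianReal]
  rw [← Complex.exp_sum]
  congr 1
  push_cast
  simp [Finset.mul_sum, Finset.sum_div, neg_div]

lemma g_exp {n : ℕ} (w : EuclideanSpace ℝ (Fin n)) :
    ∫ x, Complex.exp (((⟪w, x⟫ : ℝ) : ℂ) * Complex.I) ∂(stdGaussian n)
      = Complex.exp (((-(‖w‖ ^ 2) / 2 : ℝ) : ℂ)) := by
  unfold _root_.stdGaussian
  rw [integral_map (by fun_prop) (by fun_prop)]
  have := pi_exp 1 (fun j => w j)
  rw [EuclideanSpace.real_norm_sq_eq]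
  simp only [NNReal.coe_one, one_mul] at this
  rw [← this]
  congr 1
  ext x
  simp [PiLp.inner_apply, mul_comm]

lemma norm_comb {q : ℕ} (hq : 2 ≤ q) (s : Fin q → EuclideanSpace ℝ (Fin (q - 1)))
    (hs : IsSimplexCoding s) (t : Fin q → ℝ) :
    ‖∑ j, t j • s j‖ ^ 2 = (q / (q - 1 : ℝ)) * (∑ j, (t j - (∑ i, t i) / q) ^ 2) := by
  obtain ⟨h1, h2, -⟩ := hs
  have hq' : (2 : ℝ) ≤ q := by exact_mod_cast hq
  have hq0 : (q : ℝ) ≠ 0 := by linarith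
  have hq1 : (q : ℝ) - 1 ≠ 0 := by linarith
  rw [← real_inner_self_eq_norm_sq, sum_inner]
  simp_rw [inner_sum, real_inner_smul_left, real_inner_smul_right]
  have h3 : ∀ i j, ⟪s i, s j⟫ = -(1 / ((q : ℝ) - 1)) + if i = j then (q / (q - 1 : ℝ)) else 0 := by
    intro i j
    split_ifs with h
    · subst h
      rw [real_inner_self_eq_norm_sq, h1]
      field_simp; ring
    · rw [h2 i j h]; ring
  simp_rw [h3, mul_add, Finset.sum_add_distrib]
  have e1 : ∑ x, ∑ y, t x * (t y * -(1 / ((q : ℝ) - 1))) = -(1 / ((q : ℝ) - 1)) * (∑ i, t i) ^ 2 := by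
    rw [sq, Finset.sum_mul_sum, Finset.mul_sum]
    refine Finset.sum_congr rfl fun x _ => ?_
    rw [Finset.mul_sum]
    refine Finset.sum_congr rfl fun y _ => by ring
  have e2 : ∑ x, ∑ y, t x * (t y * if x = y then (q / (q - 1 : ℝ)) else 0)
      = (q / (q - 1 : ℝ)) * ∑ i, t i ^ 2 := by
    rw [Finset.mul_sum]
    refine Finset.sum_congr rfl fun x _ => ?_
    simp; ring
  have e3 : ∑ j, (t j - (∑ i, t i) / q) ^ 2 = ∑ i, t i ^ 2 - (∑ i, t i) ^ 2 / q := by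
    simp_rw [sub_sq, Finset.sum_add_distrib, Finset.sum_sub_distrib]
    rw [← Finset.sum_mul, ← Finset.mul_sum]
    simp
    field_simp
    ring
  rw [e1, e2, e3]
  field_simp
  ring

lemma tail_pos : ∃ c : ℝ, 0 < c ∧ ∀ t : ℝ, 0 ≤ t →
    c * Real.exp (-t ^ 2) ≤ (gaussianReal 0 1).real (Set.Ici t) := by
  refine ⟨(√(2 * Real.pi))⁻¹ * Real.exp (-1), by positivity, fun t ht => ?_⟩
  rw [Measure.real, gaussianReal_apply_eq_integral 0 one_ne_zero,
    ENNReal.toReal_ofReal (integral_nonneg fun x => gaussianPDFReal_nonneg _ _ _)]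
  have hint : IntegrableOn (gaussianPDFReal 0 1) (Set.Ici t) :=
    (integrable_gaussianPDFReal 0 1).integrableOn
  have h1 : ∫ x in Set.Icc t (t + 1), gaussianPDFReal 0 1 x ≤ ∫ x in Set.Ici t, gaussianPDFReal 0 1 x :=
    setIntegral_mono_set hint (ae_of_all _ fun x => gaussianPDFReal_nonneg _ _ _)
      (Set.Icc_subset_Ici_self.eventuallyLE)
  have h2 : ∫ x in Set.Icc t (t + 1), (√(2 * Real.pi))⁻¹ * Real.exp (-1) * Real.exp (-t ^ 2)
      ≤ ∫ x in Set.Icc t (t + 1), gaussianPDFReal 0 1 x := by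
    refine setIntegral_mono_on (integrableOn_const (by simp)) (hint.mono_set Set.Icc_subset_Ici_self) measurableSet_Icc ?_
    intro x hx
    simp only [gaussianPDFReal, NNReal.coe_one, mul_one, sub_zero]
    rw [mul_assoc, ← Real.exp_add]
    refine mul_le_mul_of_nonneg_left (Real.exp_le_exp.2 ?_) (by positivity)
    have : x ^ 2 ≤ (t + 1) ^ 2 := pow_le_pow_left₀ (ht.trans hx.1) hx.2 2
    nlinarith [sq_nonneg (t - 1)]
  rw [setIntegral_const] at h2
  simp only [Real.volume_real_Icc, add_sub_cancel_left, zero_le_one, sup_of_le_left, one_smul] at h2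
  linarith

lemma half_pos' : 0 < (gaussianReal 0 1).real (Set.Iic 0) := by
  obtain ⟨c, hc, h⟩ := tail_pos
  have h0 := h 0 le_rfl
  have : (gaussianReal 0 1).real (Set.Iic 0) = (gaussianReal 0 1).real (Set.Ici 0) := by
    have e : (gaussianReal 0 1).map (fun x => -x) = gaussianReal 0 1 := by
      simpa using gaussianReal_map_neg (μ := 0) (v := 1)
    conv_lhs => rw [← e]
    rw [map_measureReal_apply measurable_neg measurableSet_Iic]
    congr 1; ext x; simp
  rw [this]
  simp at h0
  linarith

lemma scale (σ : ℝ) :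
    gaussianReal 0 ⟨σ ^ 2, sq_nonneg σ⟩ = (gaussianReal 0 1).map (fun x => σ * x) := by
  rw [gaussianReal_map_const_mul]
  simp
  rfl

lemma mx_integrable {q : ℕ} [NeZero q] {Ω : Type} [MeasurableSpace Ω] {μ : Measure Ω}
    {h : Ω → Fin q → ℝ} (hm : Measurable h) (hi : ∀ j, Integrable (fun ω => h ω j) μ) :
    Integrable (fun ω => mx (h ω)) μ := by
  refine Integrable.mono' (integrable_finsetSum Finset.univ fun j _ => (hi j).abs)
    (continuous_mx.measurable.comp hm).aestronglyMeasurable (ae_of_all _ fun ω => ?_)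
  exact abs_mx_le _

lemma pi_real {n : ℕ} (ν : Measure ℝ) [IsProbabilityMeasure ν] (S : Fin n → Set ℝ) :
    (Measure.pi fun _ : Fin n => ν).real (Set.univ.pi S) = ∏ j, ν.real (S j) := by
  simp [Measure.real, Measure.pi_pi, ENNReal.toReal_prod]

lemma coord_map {n : ℕ} (ν : Measure ℝ) [IsProbabilityMeasure ν] (j : Fin n) :
    (Measure.pi fun _ : Fin n => ν).map (fun x => x j) = ν :=
  (measurePreserving_eval (fun _ : Fin n => ν) j).map_eq

lemma gauss_int (v : NNReal) : Integrable (fun x : ℝ => x) (gaussianReal 0 v) :=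
  (memLp_id_gaussianReal 1).integrable (by simp)

lemma coord_int {n : ℕ} (v : NNReal) (j : Fin n) :
    Integrable (fun x : Fin n → ℝ => x j) (Measure.pi fun _ : Fin n => gaussianReal 0 v) :=
  (measurePreserving_eval (fun _ : Fin n => gaussianReal 0 v) j).integrable_comp_of_integrable
    (gauss_int v)

lemma coord_mean {n : ℕ} (v : NNReal) (j : Fin n) :
    ∫ x : Fin n → ℝ, x j ∂(Measure.pi fun _ : Fin n => gaussianReal 0 v) = 0 := by
  have h := integral_map (μ := Measure.pi fun _ : Fin n => gaussianReal 0 v)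
    (φ := fun x => x j) (f := fun y : ℝ => y) (measurable_pi_apply j).aemeasurable (by fun_prop)
  rw [coord_map] at h
  rw [← h]
  simp

lemma max_lower : ∃ c : ℝ, 0 < c ∧ ∀ (q : ℕ) [NeZero q], 2 ≤ q → ∀ σ : ℝ, 0 < σ →
    c * (σ * √(Real.log q)) ≤
      ∫ x, mx x ∂(Measure.pi fun _ : Fin q => gaussianReal 0 ⟨σ ^ 2, sq_nonneg σ⟩) := by
  obtain ⟨c, hc, htail⟩ := tail_pos
  set m := (gaussianReal 0 1).real (Set.Iic 0) with hm
  have hm0 : 0 < m := half_pos'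
  have he : Real.exp (-(c / 2)) < 1 := by rw [Real.exp_lt_one_iff]; linarith
  refine ⟨m * (1 - Real.exp (-(c / 2))), mul_pos hm0 (by linarith), ?_⟩
  intro q _ hq σ hσ
  obtain ⟨n, rfl⟩ : ∃ n, q = n + 1 := ⟨q - 1, by omega⟩
  set ν := gaussianReal 0 ⟨σ ^ 2, sq_nonneg σ⟩ with hν
  have hνP : IsProbabilityMeasure ν :=
    instIsProbabilityMeasureGaussianReal 0 _
  set t := √(Real.log ((n + 1 : ℕ) : ℝ)) with ht
  have ht0 : 0 ≤ t := Real.sqrt_nonneg _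
  have hn1 : (1 : ℝ) ≤ n := by
    have : 1 ≤ n := by omega
    exact_mod_cast this
  have hts : t ^ 2 = Real.log ((n : ℝ) + 1) := by
    rw [ht, Real.sq_sqrt]
    · push_cast; rfl
    · apply Real.log_nonneg; push_cast; linarith
  set p := (gaussianReal 0 1).real (Set.Ici t) with hp
  have hpl : c / (n + 1) ≤ p := by
    have := htail t ht0
    rw [hts, Real.exp_neg, Real.exp_log (by linarith)] at this
    exact this
  have hν0 : ν.real (Set.Iic 0) = m := by
    rw [hν, scale, map_measureReal_apply (by fun_prop) measurableSet_Iic, hm]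
    congr 1
    ext x
    simp only [Set.mem_preimage, Set.mem_Iic]
    exact ⟨fun h => by by_contra h'; push Not at h'; nlinarith [mul_pos hσ h'],
      fun h => by nlinarith⟩
  have hνp : ν.real (Set.Iio (σ * t)) = 1 - p := by
    have h1 : ν.real (Set.Ici (σ * t)) = p := by
      rw [hν, scale, map_measureReal_apply (by fun_prop) measurableSet_Ici, hp]
      congr 1
      ext x
      simp only [Set.mem_preimage, Set.mem_Ici]
      exact mul_le_mul_iff_right₀ hσ
    rw [← Set.compl_Ici, probReal_compl_eq_one_sub measurableSet_Ici, h1]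
  set P := Measure.pi fun _ : Fin (n + 1) => ν with hP
  let S1 : Fin (n + 1) → Set ℝ := Fin.cons (Set.Iic 0) (fun _ => Set.univ)
  let S2 : Fin (n + 1) → Set ℝ := Fin.cons (Set.Iic 0) (fun _ => Set.Iio (σ * t))
  have hS2 : MeasurableSet (Set.univ.pi S2) := by
    refine MeasurableSet.univ_pi fun i => ?_
    refine Fin.cases ?_ (fun j => ?_) i
    · exact measurableSet_Iic
    · exact measurableSet_Iio
  have hsub : Set.univ.pi S2 ⊆ Set.univ.pi S1 := by
    refine Set.pi_mono fun i _ => ?_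
    refine Fin.cases ?_ (fun j => ?_) i
    · exact subset_rfl
    · exact Set.subset_univ _
  have m1 : P.real (Set.univ.pi S1) = m := by
    rw [hP, pi_real, Fin.prod_univ_succ]
    simp [S1, hν0]
  have m2 : P.real (Set.univ.pi S2) = m * (1 - p) ^ n := by
    rw [hP, pi_real, Fin.prod_univ_succ]
    simp [S2, hν0, hνp]
  have m3 : P.real (Set.univ.pi S1 \ Set.univ.pi S2) = m - m * (1 - p) ^ n := by
    rw [measureReal_sdiff hsub hS2, m1, m2]
  have i1 : Integrable (fun x : Fin (n + 1) → ℝ => mx x) P :=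
    Integrable.mono' (integrable_finsetSum Finset.univ fun j _ => (coord_int _ j).abs)
      continuous_mx.measurable.aestronglyMeasurable (ae_of_all _ fun ω => abs_mx_le _)
  have i2 : Integrable (fun x : Fin (n + 1) → ℝ => x 0) P := coord_int _ 0
  have key : ∫ x, mx x ∂P = ∫ x, (mx x - x 0) ∂P := by
    have i3 : ∫ x, x 0 ∂P = 0 := coord_mean _ 0
    rw [integral_sub i1 i2, i3, sub_zero]
  have markov := mul_meas_ge_le_integral_of_nonneg (μ := P) (f := fun x => mx x - x 0)
    (ae_of_all _ fun x => sub_nonneg.2 (le_mx x 0)) (i1.sub i2) (σ * t)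
  have hsub2 : Set.univ.pi S1 \ Set.univ.pi S2 ⊆ {x | σ * t ≤ mx x - x 0} := by
    intro x hx
    obtain ⟨hx1, hx2⟩ := hx
    have h0 : x 0 ≤ 0 := hx1 0 trivial
    simp only [Set.mem_ofPred_eq]
    by_contra hcon
    apply hx2
    intro i _
    refine Fin.cases ?_ (fun j => ?_) i
    · exact h0
    · have := le_mx x j.succ
      change x j.succ < σ * t
      linarith
  have hmono := measureReal_mono (μ := P) hsub2
  rw [m3] at hmono
  rw [key]
  have hp1 : p ≤ 1 := measureReal_le_one
  have hpow : (1 - p) ^ n ≤ Real.exp (-(c / 2)) := by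
    calc (1 - p) ^ n ≤ (Real.exp (-p)) ^ n := by
          apply pow_le_pow_left₀ (by linarith)
          linarith [Real.add_one_le_exp (-p)]
      _ = Real.exp (-(n * p)) := by rw [← Real.exp_nat_mul]; ring_nf
      _ ≤ Real.exp (-(c / 2)) := by
          apply Real.exp_le_exp.2
          have : n * (c / (n + 1)) ≤ n * p := mul_le_mul_of_nonneg_left hpl (by linarith)
          have h2 : c / 2 ≤ n * (c / (n + 1)) := by
            rw [← mul_div_assoc, div_le_div_iff₀ (by norm_num) (by linarith)]
            nlinarith
          linarith
  have hst : 0 ≤ σ * t := by positivity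
  calc m * (1 - Real.exp (-(c / 2))) * (σ * t) ≤ (m - m * (1 - p) ^ n) * (σ * t) := by
        apply mul_le_mul_of_nonneg_right _ hst
        nlinarith
    _ ≤ σ * t * P.real {x | σ * t ≤ mx x - x 0} := by
        rw [mul_comm]; exact mul_le_mul_of_nonneg_left hmono hst
    _ ≤ _ := markov

open WithLp in
lemma law_eq {q : ℕ} (hq : 2 ≤ q) {σ : ℝ}
    {s : Fin q → EuclideanSpace ℝ (Fin (q - 1))} (hs : IsSimplexCoding s)
    {Ω : Type} [MeasurableSpace Ω] {μ : Measure Ω} [IsProbabilityMeasure μ]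
    {g : Ω → EuclideanSpace ℝ (Fin (q - 1))} {h : Ω → Fin q → ℝ}
    (hg : Measurable g) (hh : Measurable h)
    (hgl : Measure.map g μ = stdGaussian (q - 1))
    (hhl : Measure.map h μ = (Measure.pi fun _ : Fin q => gaussianReal 0 ⟨σ ^ 2, sq_nonneg σ⟩))
    (hi : IndepFun g h μ) (k : ℝ) (hk : k ^ 2 * σ ^ 2 = q / (q - 1 : ℝ) + σ ^ 2) :
    μ.map (fun ω => toLp 2 (fun j => ⟪s j, g ω⟫ + (h ω j - (∑ i, h ω i) / q)))
      = μ.map (fun ω => toLp 2 (fun j => k * (h ω j - (∑ i, h ω i) / q))) := by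
  have hhj : ∀ j, Measurable fun ω => h ω j := fun j => (measurable_pi_apply j).comp hh
  have hm1 : Measurable (fun ω => toLp 2 (fun j => ⟪s j, g ω⟫ + (h ω j - (∑ i, h ω i) / q))) := by
    fun_prop
  have hm2 : Measurable (fun ω => toLp 2 (fun j => k * (h ω j - (∑ i, h ω i) / q))) := by
    fun_prop
  have := Measure.isProbabilityMeasure_map (μ := μ) hm1.aemeasurable
  have := Measure.isProbabilityMeasure_map (μ := μ) hm2.aemeasurable
  have hexp : ∀ u : Fin q → ℝ, ∫ ω, Complex.exp (((∑ j, u j * h ω j : ℝ) : ℂ) * Complex.I) ∂μ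
      = Complex.exp (((-(σ ^ 2 * ∑ j, u j ^ 2) / 2 : ℝ) : ℂ)) := by
    intro u
    have e := pi_exp ⟨σ ^ 2, sq_nonneg σ⟩ u
    rw [← hhl, integral_map hh.aemeasurable
      (Continuous.aestronglyMeasurable (by fun_prop))] at e
    exact e
  have gexp : ∀ w, ∫ ω, Complex.exp (((⟪w, g ω⟫ : ℝ) : ℂ) * Complex.I) ∂μ
      = Complex.exp (((-(‖w‖ ^ 2) / 2 : ℝ) : ℂ)) := by
    intro w
    have e := g_exp w
    rw [← hgl, integral_map hg.aemeasurable (by fun_prop)] at e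
    exact e
  have hcent : ∀ (t x : Fin q → ℝ), ∑ j, t j * (x j - (∑ i, x i) / q)
      = ∑ j, (t j - (∑ i, t i) / q) * x j := by
    intro t x
    simp_rw [mul_sub, sub_mul, Finset.sum_sub_distrib]
    rw [← Finset.sum_mul, ← Finset.mul_sum]
    ring
  apply Measure.ext_of_charFun
  ext t
  rw [charFun_apply, charFun_apply, integral_map hm1.aemeasurable (by fun_prop),
    integral_map hm2.aemeasurable (by fun_prop)]
  have L : ∀ ω, Complex.exp (((⟪toLp 2 (fun j => ⟪s j, g ω⟫ + (h ω j - (∑ i, h ω i) / q)), t⟫ : ℝ) : ℂ)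
        * Complex.I)
      = Complex.exp (((⟪∑ j, t j • s j, g ω⟫ : ℝ) : ℂ) * Complex.I) *
        Complex.exp (((∑ j, (t j - (∑ i, t i) / q) * h ω j : ℝ) : ℂ) * Complex.I) := by
    intro ω
    rw [← Complex.exp_add, ← add_mul, ← Complex.ofReal_add]
    congr 3
    rw [← hcent, sum_inner, ← Finset.sum_add_distrib]
    rw [PiLp.inner_apply]
    refine Finset.sum_congr rfl fun j _ => ?_
    rw [real_inner_smul_left]
    change t j * (_ + _) = _
    ring
  have R : ∀ ω, Complex.exp (((⟪toLp 2 (fun j => k * (h ω j - (∑ i, h ω i) / q)), t⟫ : ℝ) : ℂ)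
        * Complex.I)
      = Complex.exp (((∑ j, (k * (t j - (∑ i, t i) / q)) * h ω j : ℝ) : ℂ) * Complex.I) := by
    intro ω
    congr 3
    simp_rw [mul_assoc]
    rw [← Finset.mul_sum, ← hcent, Finset.mul_sum]
    simp only [PiLp.inner_apply]
    refine Finset.sum_congr rfl fun j _ => ?_
    simp
    ring
  simp_rw [L, R]
  rw [hexp]
  have ind := hi.integral_fun_comp_mul_comp (μ := μ)
    (f := fun x => Complex.exp (((⟪∑ j, t j • s j, x⟫ : ℝ) : ℂ) * Complex.I))
    (g := fun x : Fin q → ℝ => Complex.exp (((∑ j, (t j - (∑ i, t i) / q) * x j : ℝ) : ℂ) * Complex.I))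
    hg.aemeasurable hh.aemeasurable (by fun_prop)
    (Continuous.aestronglyMeasurable (by fun_prop))
  rw [ind, gexp, hexp, ← Complex.exp_add, ← Complex.ofReal_add, norm_comb hq s hs]
  congr 2
  simp_rw [mul_pow]
  rw [← Finset.mul_sum]
  linear_combination (∑ j, (t j - (∑ i, t i) / q) ^ 2) / 2 * hk

lemma inner_int {n : ℕ} {Ω : Type} [MeasurableSpace Ω] {μ : Measure Ω}
    {g : Ω → EuclideanSpace ℝ (Fin n)} (hg : Measurable g)
    (hgl : Measure.map g μ = stdGaussian n) (w : EuclideanSpace ℝ (Fin n)) :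
    Integrable (fun ω => ⟪w, g ω⟫) μ := by
  have h1 : Integrable (fun x => ⟪w, x⟫) (stdGaussian n) := by
    unfold _root_.stdGaussian
    rw [integrable_map_measure (by fun_prop) (by fun_prop)]
    have : (fun x => ⟪w, x⟫) ∘ ⇑(EuclideanSpace.equiv (Fin n) ℝ).symm
        = fun x => ∑ j, w j * x j := by
      ext x
      simp [PiLp.inner_apply, mul_comm]
    rw [this]
    exact integrable_finsetSum _ fun j _ => (coord_int 1 j).const_mul _
  rw [← hgl] at h1
  exact h1.comp_measurable hg

end NoisyLB

/-- Noisy version of the `λ(q)` lower bound: if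
`γ̄ = argmax_j (⟪s j, g⟫ + h j)` with `g` standard Gaussian and `h_j` i.i.d. `N(0, σ²)`
independent of `g`, then `E ⟪s γ̄, g⟫ ≥ C √(log q / (1 + σ²))`. -/
theorem lambdaQ_noisy_lower_bound :
    ∃ C : ℝ, 0 < C ∧
      ∀ (q : ℕ), 2 ≤ q →
      ∀ (σ : ℝ), 0 < σ →
      ∀ (s : Fin q → EuclideanSpace ℝ (Fin (q - 1))), IsSimplexCoding s →
      ∀ (Ω : Type) (_ : MeasurableSpace Ω) (μ : Measure Ω), IsProbabilityMeasure μ →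
      ∀ (g : Ω → EuclideanSpace ℝ (Fin (q - 1))) (h : Ω → Fin q → ℝ),
        Measurable g → Measurable h →
        Measure.map g μ = stdGaussian (q - 1) →
        Measure.map h μ = (Measure.pi fun _ : Fin q => gaussianReal 0 ⟨σ ^ 2, sq_nonneg σ⟩) →
        IndepFun g h μ →
      ∀ (γ : Ω → Fin q),
        Measurable γ →
        (∀ ω j, ⟪s j, g ω⟫ + h ω j ≤ ⟪s (γ ω), g ω⟫ + h ω (γ ω)) →
      C * Real.sqrt (Real.log q / (1 + σ ^ 2)) ≤ ∫ ω, ⟪s (γ ω), g ω⟫ ∂μ := by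
  obtain ⟨c, hc, hmax⟩ := NoisyLB.max_lower
  refine ⟨c / 2, by linarith, ?_⟩
  intro q hq σ hσ s hs Ω _ μ _ g h hg hh hgl hhl hi γ hγ hγm
  have : NeZero q := ⟨by omega⟩
  have hq' : (2 : ℝ) ≤ q := by exact_mod_cast hq
  have hhj : ∀ j, Measurable fun ω => h ω j := fun j => (measurable_pi_apply j).comp hh
  have hM := hmax q hq σ hσ
  rw [← hhl, integral_map hh.aemeasurable NoisyLB.continuous_mx.measurable.aestronglyMeasurable] at hM
  have ih : ∀ j, Integrable (fun ω => h ω j) μ := by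
    intro j
    have e := NoisyLB.coord_int (n := q) ⟨σ ^ 2, sq_nonneg σ⟩ j
    rw [← hhl] at e
    exact e.comp_measurable hh
  have mh : ∀ j, ∫ ω, h ω j ∂μ = 0 := by
    intro j
    have e := NoisyLB.coord_mean (n := q) ⟨σ ^ 2, sq_nonneg σ⟩ j
    rw [← hhl, integral_map hh.aemeasurable
      (continuous_apply j).measurable.aestronglyMeasurable] at e
    exact e
  have ig := NoisyLB.inner_int hg hgl
  have imean : Integrable (fun ω => (∑ i, h ω i) / (q : ℝ)) μ :=
    (integrable_finsetSum _ fun j _ => ih j).div_const _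
  have mmean : ∫ ω, (∑ i, h ω i) / (q : ℝ) ∂μ = 0 := by
    rw [integral_div, integral_finsetSum _ fun j _ => ih j]
    simp [mh]
  have imx : Integrable (fun ω => NoisyLB.mx (h ω)) μ := NoisyLB.mx_integrable hh ih
  have imY : Integrable (fun ω => NoisyLB.mx (fun j => ⟪s j, g ω⟫ + h ω j)) μ :=
    NoisyLB.mx_integrable (by fun_prop) fun j => (ig _).add (ih j)
  set a2 : ℝ := q / (q - 1 : ℝ) with ha2
  have ha1 : 1 ≤ a2 := by
    rw [ha2, le_div_iff₀ (by linarith)]; linarith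
  set k : ℝ := √(a2 + σ ^ 2) / σ with hk
  have hk0 : 0 ≤ k := by positivity
  have hksq : k ^ 2 * σ ^ 2 = a2 + σ ^ 2 := by
    rw [hk, div_pow, Real.sq_sqrt (by positivity)]
    field_simp
  have law := NoisyLB.law_eq hq hs hg hh hgl hhl hi k hksq
  have EY : ∫ ω, NoisyLB.mx (fun j => ⟪s j, g ω⟫ + h ω j) ∂μ = k * ∫ ω, NoisyLB.mx (h ω) ∂μ := by
    have hcm : Continuous fun y : EuclideanSpace ℝ (Fin q) => NoisyLB.mx (WithLp.ofLp y) :=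
      NoisyLB.continuous_mx.comp (by fun_prop)
    have e := congrArg (fun ρ => ∫ y : EuclideanSpace ℝ (Fin q), NoisyLB.mx (WithLp.ofLp y) ∂ρ) law
    rw [integral_map (by fun_prop) hcm.measurable.aestronglyMeasurable,
      integral_map (by fun_prop) hcm.measurable.aestronglyMeasurable] at e
    have e1 : ∀ ω, NoisyLB.mx (fun j => ⟪s j, g ω⟫ + (h ω j - (∑ i, h ω i) / q))
        = NoisyLB.mx (fun j => ⟪s j, g ω⟫ + h ω j) - (∑ i, h ω i) / q := by
      intro ω
      rw [sub_eq_add_neg, ← NoisyLB.mx_add]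
      congr 1; ext j; ring
    have e2 : ∀ ω, NoisyLB.mx (fun j => k * (h ω j - (∑ i, h ω i) / q))
        = k * (NoisyLB.mx (h ω) - (∑ i, h ω i) / q) := by
      intro ω
      rw [NoisyLB.mx_mul _ hk0, sub_eq_add_neg, ← NoisyLB.mx_add]
      rfl
    simp only [e1, e2] at e
    rw [integral_const_mul, integral_sub imY imean, integral_sub imx imean, mmean] at e
    simpa using e
  have iX : Integrable (fun ω => ⟪s (γ ω), g ω⟫) μ := by
    have e : ∀ ω, ⟪s (γ ω), g ω⟫ = ∑ j, if γ ω = j then ⟪s j, g ω⟫ else 0 := by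
      intro ω; simp
    simp_rw [e]
    refine integrable_finsetSum _ fun j _ => ?_
    have := (ig (s j)).indicator (hγ (measurableSet_singleton j))
    refine this.congr (ae_of_all _ fun ω => ?_)
    by_cases hj : γ ω = j
    · rw [Set.indicator_of_mem (by exact hj)]; exact (if_pos hj).symm
    · rw [Set.indicator_of_notMem (by exact hj)]; exact (if_neg hj).symm
  have hstep : ∫ ω, NoisyLB.mx (fun j => ⟪s j, g ω⟫ + h ω j) ∂μ - ∫ ω, NoisyLB.mx (h ω) ∂μ
      ≤ ∫ ω, ⟪s (γ ω), g ω⟫ ∂μ := by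
    rw [← integral_sub imY imx]
    refine integral_mono (imY.sub imx) iX fun ω => ?_
    have h1 := NoisyLB.mx_le (hγm ω)
    have h2 := NoisyLB.le_mx (h ω) (γ ω)
    simp only
    linarith
  refine le_trans ?_ hstep
  rw [EY]
  set r := √(1 + σ ^ 2) with hr
  have hr0 : 0 < r := by positivity
  have hrsq : r ^ 2 = 1 + σ ^ 2 := Real.sq_sqrt (by positivity)
  have hrσ : σ ≤ r := by nlinarith
  have hra : r ≤ √(a2 + σ ^ 2) := Real.sqrt_le_sqrt (by linarith)
  have hkσ : k * σ = √(a2 + σ ^ 2) := by rw [hk]; field_simp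
  have hk1 : 1 ≤ k := by
    rw [hk, le_div_iff₀ hσ]; linarith
  have hrr : 1 / (2 * r) ≤ k * σ - σ := by
    rw [hkσ, div_le_iff₀ (by positivity)]
    nlinarith
  have hl : 0 ≤ √(Real.log q) := Real.sqrt_nonneg _
  rw [Real.sqrt_div' _ (by positivity)]
  calc c / 2 * (√(Real.log q) / r) = c * √(Real.log q) * (1 / (2 * r)) := by field_simp
    _ ≤ c * √(Real.log q) * (k * σ - σ) := mul_le_mul_of_nonneg_left hrr (by positivity)
    _ = (k - 1) * (c * (σ * √(Real.log q))) := by ring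
    _ ≤ (k - 1) * ∫ ω, NoisyLB.mx (h ω) ∂μ := mul_le_mul_of_nonneg_left hM (by linarith)
    _ = _ := by ring
end

section
/- There exists a universal constant C > 0 such that for all integers 1 ≤ s ≤ d, the set K_1 = { u ∈ ℝ^d : ‖u‖_1 ≤ √s, ‖u‖_2 ≤ 1 } satisfies w(K_1) ≤ C √( s log(2d/s) ). -/
open MeasureTheory ProbabilityTheory
open scoped RealInnerProductSpace ENNReal Pointwise

lemma coord_mp (d : ℕ) (i : Fin d) :
    MeasurePreserving (fun g : EuclideanSpace ℝ (Fin d) => g i) (_root_.stdGaussian d)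
      (gaussianReal 0 1) := by
  have h1 : MeasurePreserving ((EuclideanSpace.equiv (Fin d) ℝ).symm)
      (Measure.pi fun _ : Fin d => gaussianReal 0 1) (_root_.stdGaussian d) :=
    ⟨(EuclideanSpace.equiv (Fin d) ℝ).symm.continuous.measurable, rfl⟩
  have h2 := measurePreserving_eval (fun _ : Fin d => gaussianReal 0 1) i
  refine ⟨by fun_prop, ?_⟩
  rw [← h1.map_eq, Measure.map_map (by fun_prop) h1.measurable]
  exact h2.map_eq

lemma coord_exp (d : ℕ) (i : Fin d) (t : ℝ) :
    Integrable (fun g : EuclideanSpace ℝ (Fin d) => Real.exp (t * g i)) (_root_.stdGaussian d) ∧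
    ∫ g, Real.exp (t * g i) ∂(_root_.stdGaussian d) = Real.exp (t ^ 2 / 2) := by
  have h := coord_mp d i
  have hi : Integrable (fun x => Real.exp (t * x)) (gaussianReal 0 1) :=
    integrable_exp_mul_gaussianReal t
  refine ⟨h.integrable_comp_of_integrable hi, ?_⟩
  have h3 : ∫ x, Real.exp (t * x) ∂(_root_.stdGaussian d).map (fun g => g i)
      = ∫ g, Real.exp (t * g i) ∂(_root_.stdGaussian d) :=
    integral_map h.measurable.aemeasurable (by fun_prop)
  rw [← h3, h.map_eq]
  have := congrFun (mgf_id_gaussianReal (μ := 0) (v := 1)) t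
  simpa [mgf] using this

lemma prob (d : ℕ) : IsProbabilityMeasure (_root_.stdGaussian d) :=
  Measure.isProbabilityMeasure_map
    (EuclideanSpace.equiv (Fin d) ℝ).symm.continuous.measurable.aemeasurable

/-- Scalar bound. -/
lemma scalar_bound (t r a z : ℝ) (ht : 0 < t) (hr : 0 < r) :
    a * z ≤ t * |z| + r / 4 * z ^ 2 +
      (2 / t ^ 2 * Real.exp (-t ^ 2) / r) * (Real.exp (t * a) + Real.exp (-t * a)) := by
  have h1 : a * z ≤ |a| * |z| := by rw [← abs_mul]; exact le_abs_self _
  set p := max (|a| - t) 0 with hp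
  have hp0 : 0 ≤ p := le_max_right _ _
  have hp1 : |a| ≤ t + p := by linarith [le_max_left (|a| - t) 0]
  have h2 : p * |z| ≤ r / 4 * z ^ 2 + p ^ 2 / r := by
    have : r / 4 * z ^ 2 + p ^ 2 / r - p * |z| = (r * |z| / 2 - p) ^ 2 / r := by
      rw [← sq_abs z]; field_simp; ring
    have : 0 ≤ (r * |z| / 2 - p) ^ 2 / r := by positivity
    linarith
  have h3 : p ^ 2 ≤ 2 / t ^ 2 * Real.exp (-t ^ 2) * (Real.exp (t * a) + Real.exp (-t * a)) := by
    rcases le_total (|a| - t) 0 with h | h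
    · rw [hp, max_eq_right h]
      have : 0 ≤ 2 / t ^ 2 * Real.exp (-t ^ 2) * (Real.exp (t * a) + Real.exp (-t * a)) := by
        positivity
      simpa using this
    · have hpe : p = |a| - t := by rw [hp, max_eq_left h]
      have hq := Real.quadratic_le_exp_of_nonneg (x := t * p) (by positivity)
      have hq2 : (t * p) ^ 2 / 2 ≤ Real.exp (t * p) := by
        have : 0 ≤ t * p := by positivity
        linarith
      have he : Real.exp (t * p) = Real.exp (-t ^ 2) * Real.exp (t * |a|) := by
        rw [← Real.exp_add, hpe]; congr 1; ring
      have ha : Real.exp (t * |a|) ≤ Real.exp (t * a) + Real.exp (-t * a) := by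
        rcases abs_choice a with h | h <;> rw [h]
        · linarith [Real.exp_pos (-t * a)]
        · have : t * -a = -t * a := by ring
          rw [this]; linarith [Real.exp_pos (t * a)]
      calc p ^ 2 = 2 / t ^ 2 * ((t * p) ^ 2 / 2) := by field_simp
        _ ≤ 2 / t ^ 2 * Real.exp (t * p) := by gcongr
        _ = 2 / t ^ 2 * Real.exp (-t ^ 2) * Real.exp (t * |a|) := by rw [he]; ring
        _ ≤ _ := by gcongr
  have h4 : p ^ 2 / r ≤ (2 / t ^ 2 * Real.exp (-t ^ 2) / r) *
      (Real.exp (t * a) + Real.exp (-t * a)) := by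
    calc p ^ 2 / r ≤ (2 / t ^ 2 * Real.exp (-t ^ 2) *
          (Real.exp (t * a) + Real.exp (-t * a))) / r := by gcongr
      _ = _ := by ring
  have h5 : |a| * |z| ≤ (t + p) * |z| := by gcongr
  linarith

lemma final_num (d s L : ℝ) (hs : 1 ≤ s) (hd : 1 ≤ d) (hL : 1 / 2 ≤ L)
    (he : Real.exp (-L) = s / (2 * d)) :
    √(2 * L) * (2 * √s) + √s +
      d * ((2 / √(2 * L) ^ 2 * Real.exp (-√(2 * L) ^ 2) / √s) * (2 * Real.exp (√(2 * L) ^ 2 / 2)))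
      ≤ 10 * √(s * L) := by
  have h2 : √(2 * L) ^ 2 = 2 * L := Real.sq_sqrt (by linarith)
  rw [h2, Real.sqrt_mul (by linarith : (0:ℝ) ≤ s), Real.sqrt_mul (by norm_num : (0:ℝ) ≤ 2)]
  have hs2 : √s ^ 2 = s := Real.sq_sqrt (by linarith)
  have hs0 : 0 < √s := Real.sqrt_pos.2 (by linarith)
  have hx : Real.exp (-(2 * L)) * Real.exp (2 * L / 2) = s / (2 * d) := by
    rw [← he, ← Real.exp_add]; congr 1; ring
  have e1 : d * ((2 / (2 * L) * Real.exp (-(2 * L)) / √s) * (2 * Real.exp (2 * L / 2)))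
      = √s / L := by
    have : d * ((2 / (2 * L) * Real.exp (-(2 * L)) / √s) * (2 * Real.exp (2 * L / 2)))
      = d * (2 / (2 * L) / √s * 2) * (Real.exp (-(2 * L)) * Real.exp (2 * L / 2)) := by ring
    rw [this, hx]
    field_simp
    linarith
  rw [e1]
  have hl : √s / L ≤ √s * 2 := by
    rw [div_le_iff₀ (by linarith)]; nlinarith
  have hsq2 : √2 ≤ 3 / 2 := by
    rw [Real.sqrt_le_left (by norm_num)]; norm_num
  have hL7 : (7:ℝ) / 10 ≤ √L := Real.le_sqrt_of_sq_le (by linarith)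
  nlinarith [mul_le_mul_of_nonneg_right hsq2 (by positivity : 0 ≤ √s * √L),
    mul_le_mul_of_nonneg_left hL7 hs0.le]

/-- Gaussian mean width of the set
`K₁ = {u : ‖u‖₁ ≤ √s, ‖u‖₂ ≤ 1}`: `w(K₁) ≤ C √(s log(2d/s))`. -/
theorem meanWidth_sparse_relaxation :
    ∃ C : ℝ, 0 < C ∧
      ∀ (d s : ℕ), 1 ≤ s → s ≤ d →
        meanWidth {u : EuclideanSpace ℝ (Fin d) |
            (∑ i, |u i|) ≤ Real.sqrt s ∧ ‖u‖ ≤ 1} ≤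
          C * Real.sqrt (s * Real.log (2 * d / s)) := by
  refine ⟨10, by norm_num, ?_⟩
  intro d s hs hsd
  have hs' : (1:ℝ) ≤ s := by exact_mod_cast hs
  have hsd' : (s:ℝ) ≤ d := by exact_mod_cast hsd
  have hd' : (1:ℝ) ≤ d := hs'.trans hsd'
  set L := Real.log (2 * d / s) with hLdef
  have hL : 1 / 2 ≤ L := by
    have : Real.log 2 ≤ L := by
      apply Real.log_le_log (by norm_num)
      rw [le_div_iff₀ (by linarith)]; linarith
    linarith [Real.log_two_gt_d9]
  have he : Real.exp (-L) = s / (2 * d) := by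
    rw [Real.exp_neg, hLdef, Real.exp_log (by positivity), inv_div]
  set t := √(2 * L) with htdef
  have ht : 0 < t := Real.sqrt_pos.2 (by linarith)
  have hr : 0 < √(s:ℝ) := Real.sqrt_pos.2 (by linarith)
  set c := 2 / t ^ 2 * Real.exp (-t ^ 2) / √(s:ℝ) with hc
  let F : EuclideanSpace ℝ (Fin d) → ℝ := fun g =>
    (t * (2 * √(s:ℝ)) + √(s:ℝ)) + ∑ i, c * (Real.exp (t * g i) + Real.exp (-t * g i))
  have := prob d
  have hterm : ∀ i : Fin d, Integrable (fun g : EuclideanSpace ℝ (Fin d) =>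
      c * (Real.exp (t * g i) + Real.exp (-t * g i))) (_root_.stdGaussian d) := fun i =>
    ((coord_exp d i t).1.add (coord_exp d i (-t)).1).const_mul c
  have hF : Integrable F (_root_.stdGaussian d) :=
    (integrable_const _).add (integrable_finsetSum _ fun i _ => hterm i)
  have hFint : ∫ g, F g ∂(_root_.stdGaussian d) =
      t * (2 * √(s:ℝ)) + √(s:ℝ) + d * (c * (2 * Real.exp (t ^ 2 / 2))) := by
    simp only [F]
    rw [integral_add (integrable_const _) (integrable_finsetSum _ fun i _ => hterm i),
      integral_finsetSum _ fun i _ => hterm i]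
    have : ∀ i : Fin d, ∫ g : EuclideanSpace ℝ (Fin d),
        c * (Real.exp (t * g i) + Real.exp (-t * g i)) ∂(_root_.stdGaussian d)
        = c * (2 * Real.exp (t ^ 2 / 2)) := by
      intro i
      rw [integral_const_mul, integral_add (coord_exp d i t).1 (coord_exp d i (-t)).1,
        (coord_exp d i t).2, (coord_exp d i (-t)).2, neg_sq]
      ring
    rw [Finset.sum_congr rfl fun i _ => this i]
    simp
  refine le_trans ?_ (hFint.trans_le (final_num d s L hs' hd' hL he))
  unfold meanWidth
  apply integral_mono_of_nonneg _ hF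
  · refine Filter.Eventually.of_forall fun g => csSup_le ?_ ?_
    · refine ⟨_, 0, ⟨0, ?_, 0, ?_, sub_zero 0⟩, rfl⟩ <;> simp
    · rintro _ ⟨_, ⟨u, ⟨hu1, hu2⟩, v, ⟨hv1, hv2⟩, rfl⟩, rfl⟩
      set z := u - v with hz
      have hz1 : ∑ i, |z i| ≤ 2 * √(s:ℝ) := by
        calc ∑ i, |z i| ≤ ∑ i, (|u i| + |v i|) :=
              Finset.sum_le_sum fun i _ => by simpa [hz] using abs_sub (u i) (v i)
          _ ≤ _ := by rw [Finset.sum_add_distrib]; linarith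
      have hz2 : ∑ i, z i ^ 2 ≤ 4 := by
        rw [← EuclideanSpace.real_norm_sq_eq]
        have : ‖z‖ ≤ 2 := (norm_sub_le u v).trans (by linarith)
        nlinarith [norm_nonneg z]
      have hin : ⟪g, z⟫ = ∑ i, g i * z i := by
        simp [PiLp.inner_apply, mul_comm]
      change ⟪g, z⟫ ≤ F g
      rw [hin]
      calc ∑ i, g i * z i ≤ ∑ i, (t * |z i| + √(s:ℝ) / 4 * z i ^ 2 +
            c * (Real.exp (t * g i) + Real.exp (-t * g i))) :=
            Finset.sum_le_sum fun i _ => scalar_bound t _ (g i) (z i) ht hr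
        _ = t * ∑ i, |z i| + √(s:ℝ) / 4 * ∑ i, z i ^ 2 +
            ∑ i, c * (Real.exp (t * g i) + Real.exp (-t * g i)) := by
            rw [Finset.sum_add_distrib, Finset.sum_add_distrib, Finset.mul_sum, Finset.mul_sum]
        _ ≤ F g := by
            simp only [F]
            have a1 := mul_le_mul_of_nonneg_left hz1 ht.le
            have a2 := mul_le_mul_of_nonneg_left hz2 (by positivity : 0 ≤ √(s:ℝ) / 4)
            linarith
  · refine Filter.Eventually.of_forall fun g => Real.sSup_nonneg' ?_
    refine ⟨0, ⟨0, ⟨0, ?_, 0, ?_, sub_zero 0⟩, by simp⟩, le_rfl⟩ <;> simp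
end
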